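/- Let n, d, k be integers with d ≥ 3 and 1 ≤ k ≤ n. Then E[∫ f_{S_−(X)} dμ_k] ≥ (1/6)·d·2^n. -/

import Mathlib

open MeasureTheory Finset

noncomputable section

/-- Points of the grid `[2^n]^d` (coordinates taken 0-based). -/
abbrev GridPt (n d : ℕ) := Fin d → Fin (2^n)

/-- Normalized counting "volume" of a subset of the grid: `Vol(A) = 2^{-nd}|A|`. -/
def Vol (n d : ℕ) (A : Finset (GridPt n d)) : ℝ := (A.card : ℝ) / 2^(n*d)

/-- The ℓ1 metric on the grid. -/
def gdist {n d : ℕ} (u v : GridPt n d) : ℝ := ∑ i, |((u i : ℕ) : ℝ) - ((v i : ℕ) : ℝ)|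

/-- Indices of the dyadic cubes in `D_k`. -/
abbrev CubeIdx (d k : ℕ) := Fin d → Fin (2^k)

/-- The dyadic cube of side-cardinality `2^(n-k)` indexed by `j ∈ {0,…,2^k-1}^d`. -/
def cube (n d k : ℕ) (j : CubeIdx d k) : Finset (GridPt n d) :=
  Finset.univ.filter (fun x => ∀ i, (x i : ℕ) / 2^(n-k) = (j i : ℕ))

/-- `p = 2^{-4d}`. -/
def pp (d : ℕ) : ℝ := ((2:ℝ)^(4*d))⁻¹

/-- The law of each `X_Q`: takes values `±1` with probability `p/2` each
and `0` with probability `1-p`. -/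
def stepMeasure (d : ℕ) : Measure ℝ :=
  (Real.toNNReal (pp d / 2)) • Measure.dirac (1:ℝ)
  + (Real.toNNReal (pp d / 2)) • Measure.dirac (-1:ℝ)
  + (Real.toNNReal (1 - pp d)) • Measure.dirac (0:ℝ)

instance (d : ℕ) : IsFiniteMeasure (stepMeasure d) := by
  unfold stepMeasure; infer_instance

/-- The joint law of the i.i.d. family `{X_Q}_{Q ∈ D_k}`; a sample point
`ω : CubeIdx d k → ℝ` records the values `X_Q = ω Q`. -/
def prodMeasure (d k : ℕ) : Measure (CubeIdx d k → ℝ) :=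
  Measure.pi fun _ => stepMeasure d

/-- `μ_k(A) = ∑_{Q ∈ D_k} p⁻¹ 2^k X_Q Vol(A ∩ Q)`, as a function of the sample point `ω`. -/
def muMeas (n d k : ℕ) (A : Finset (GridPt n d)) (ω : CubeIdx d k → ℝ) : ℝ :=
  ∑ j : CubeIdx d k, (pp d)⁻¹ * 2^k * ω j * Vol n d (A ∩ cube n d k j)

/-- The function `f_S(z) = min{dist(z, ∪_{Q∈S} Q), d·2^n}`, with `f_∅ ≡ d·2^n`. -/
def fS (n d k : ℕ) (S : Finset (CubeIdx d k)) (z : GridPt n d) : ℝ :=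
  if h : (S.biUnion (cube n d k)).Nonempty
  then min ((S.biUnion (cube n d k)).inf' h (fun w => gdist z w)) ((d:ℝ) * 2^n)
  else (d:ℝ) * 2^n

/-- The random subset `S₋(X) = {Q ∈ D_k : X_Q = -1}`. -/
def Sminus (d k : ℕ) (ω : CubeIdx d k → ℝ) : Finset (CubeIdx d k) :=
  Finset.univ.filter (fun j => ω j = -1)

/-- `∫ f dVol`, where `Vol` is the normalized counting measure on the grid. -/
def intVol (n d : ℕ) (f : GridPt n d → ℝ) : ℝ := (∑ x, f x) / 2^(n*d)

/-- `∫ f dμ_k`, as a function of the sample point `ω`. -/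
def intMu (n d k : ℕ) (f : GridPt n d → ℝ) (ω : CubeIdx d k → ℝ) : ℝ :=
  ∑ x, f x * muMeas n d k {x} ω

/-!
At a point `x` of a cube `Q`, the density of `μ_k` with respect to `Vol` is `p⁻¹ 2^k X_Q`, so it
suffices to bound `E[f_{S₋}(x) X_Q]` from below. The product `f_{S₋}(x) X_Q` is almost surely
nonnegative, because `f_{S₋}` vanishes on `Q` when `X_Q = -1`. It is at least `d 2^(n-k)` when
`X_Q = 1` and no cube whose index is within `ℓ1`-distance `2d` of that of `Q` has value `-1`: points
of two cubes with indices at distance `r` are at distance at least `(r - d) 2^(n-k)`.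

There are at most `12^d ≤ p⁻¹` such neighbors, so by Bernoulli's inequality this event has
probability at least `(p/2)(1 - 12^d p/2) ≥ p/4`. Multiplying by `p⁻¹ 2^k` and averaging over `x`
gives `d 2^n / 4`. The count of the neighbors is Markov's inequality for the generating function
`∑_{v ∈ ℤ^d} 2^{-|v|₁} = 3^d`.
-/

lemma sum_range_half_pow_natDist_le (a m : ℕ) :
    ∑ b ∈ range m, (1 / 2 : ℝ) ^ Nat.dist a b ≤ 3 := by
  have below : ∑ b ∈ range a, (1 / 2 : ℝ) ^ Nat.dist a b ≤ 1 := by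
    calc ∑ b ∈ range a, (1 / 2 : ℝ) ^ Nat.dist a b
        = ∑ b ∈ range a, (1 / 2 : ℝ) ^ (a - 1 - b) * (1 / 2) := by
          refine sum_congr rfl fun b hb ↦ ?_
          have hb := mem_range.1 hb
          rw [← pow_succ, Nat.dist_eq_sub_of_le_right hb.le]
          congr 1
          lia
      _ = (∑ b ∈ range a, (1 / 2 : ℝ) ^ b) * (1 / 2) := by
          rw [← sum_mul, sum_range_reflect (fun b ↦ (1 / 2 : ℝ) ^ b)]
      _ ≤ 1 := by linarith [sum_geometric_two_le a]
  have above : ∑ b ∈ range m, (1 / 2 : ℝ) ^ Nat.dist a (a + b) ≤ 2 := by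
    simpa [Nat.dist_eq_sub_of_le] using sum_geometric_two_le m
  calc ∑ b ∈ range m, (1 / 2 : ℝ) ^ Nat.dist a b
      ≤ ∑ b ∈ range (a + m), (1 / 2 : ℝ) ^ Nat.dist a b :=
        sum_le_sum_of_subset_of_nonneg (range_subset_range.2 (Nat.le_add_left m a))
          fun _ _ _ ↦ by positivity
    _ ≤ 3 := by
        rw [sum_range_add]
        linarith

lemma sum_half_pow_sum_natDist_le {ι : Type*} [Fintype ι] [DecidableEq ι] {m : ℕ}
    (a : ι → Fin m) :
    ∑ b : ι → Fin m, (1 / 2 : ℝ) ^ (∑ i, Nat.dist (a i) (b i)) ≤ 3 ^ Fintype.card ι := by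
  simp_rw [← prod_pow_eq_pow_sum]
  rw [← Fintype.prod_sum (fun i (b : Fin m) ↦ (1 / 2 : ℝ) ^ Nat.dist (a i) b), ← card_univ,
    ← prod_const]
  refine prod_le_prod (fun i _ ↦ by positivity) fun i _ ↦ ?_
  rw [Fin.sum_univ_eq_sum_range fun b ↦ (1 / 2 : ℝ) ^ Nat.dist (a i) b]
  exact sum_range_half_pow_natDist_le (a i) m

lemma card_sum_natDist_le {ι : Type*} [Fintype ι] [DecidableEq ι] {m : ℕ}
    (a : ι → Fin m) (r : ℕ) :
    (#{b : ι → Fin m | ∑ i, Nat.dist (a i) (b i) ≤ r} : ℝ) ≤ 2 ^ r * 3 ^ Fintype.card ι := by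
  have markov : (#{b : ι → Fin m | ∑ i, Nat.dist (a i) (b i) ≤ r} : ℝ) * (1 / 2) ^ r
      ≤ ∑ b : ι → Fin m, (1 / 2 : ℝ) ^ (∑ i, Nat.dist (a i) (b i)) := by
    rw [← nsmul_eq_mul]
    refine (card_nsmul_le_sum _ _ _ fun b hb ↦ ?_).trans
      (sum_le_univ_sum_of_nonneg fun b ↦ by positivity)
    exact pow_le_pow_of_le_one (by norm_num) (by norm_num) (mem_filter.1 hb).2
  have h := markov.trans (sum_half_pow_sum_natDist_le a)
  rwa [one_div, inv_pow, ← div_eq_mul_inv, div_le_iff₀' (by positivity)] at h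

section

variable {n d k : ℕ}

lemma gdist_nonneg (u v : GridPt n d) : 0 ≤ gdist u v :=
  sum_nonneg fun _ _ ↦ abs_nonneg _

@[simp]
lemma gdist_self (u : GridPt n d) : gdist u u = 0 := by
  simp [gdist]

lemma gdist_eq_sum_natDist (u v : GridPt n d) :
    gdist u v = ((∑ i, Nat.dist (u i) (v i) : ℕ) : ℝ) := by
  rw [gdist, Nat.cast_sum]
  refine sum_congr rfl fun i _ ↦ ?_
  rcases le_total (u i : ℕ) (v i) with h | h
  · rw [Nat.dist_eq_sub_of_le h, Nat.cast_sub h, abs_sub_comm,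
      abs_of_nonneg (sub_nonneg.2 (Nat.cast_le.2 h))]
  · rw [Nat.dist_eq_sub_of_le_right h, Nat.cast_sub h,
      abs_of_nonneg (sub_nonneg.2 (Nat.cast_le.2 h))]

lemma card_gdist_le (u : GridPt n d) (r : ℕ) :
    (#{v : GridPt n d | gdist u v ≤ r} : ℝ) ≤ 2 ^ r * 3 ^ d := by
  simpa [gdist_eq_sum_natDist, -Nat.cast_sum] using card_sum_natDist_le u r

lemma mul_natDist_div_le (u v L : ℕ) : L * Nat.dist (u / L) (v / L) ≤ Nat.dist u v + L := by
  rcases Nat.eq_zero_or_pos L with rfl | hL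
  · simp
  have hu := Nat.mul_div_le u L
  have hv := Nat.mul_div_le v L
  have hu' := Nat.lt_mul_div_succ u hL
  have hv' := Nat.lt_mul_div_succ v hL
  rw [← Nat.dist_mul_left]
  unfold Nat.dist
  lia

lemma mul_gdist_le_of_mem_cube {i j : CubeIdx d k} {x y : GridPt n d}
    (hx : x ∈ cube n d k i) (hy : y ∈ cube n d k j) :
    2 ^ (n - k) * gdist i j ≤ gdist x y + d * 2 ^ (n - k) := by
  simp only [cube, mem_filter, mem_univ, true_and] at hx hy
  have hcoord : ∑ l, 2 ^ (n - k) * Nat.dist (i l) (j l) ≤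
      ∑ l, (Nat.dist (x l) (y l) + 2 ^ (n - k)) :=
    sum_le_sum fun l _ ↦ hx l ▸ hy l ▸ mul_natDist_div_le (x l) (y l) (2 ^ (n - k))
  simp only [sum_add_distrib, ← mul_sum, sum_const, card_univ, Fintype.card_fin,
    smul_eq_mul] at hcoord
  rw [gdist_eq_sum_natDist, gdist_eq_sum_natDist]
  exact_mod_cast hcoord

lemma le_fS_iff {S : Finset (CubeIdx d k)} {z : GridPt n d} {r : ℝ} :
    r ≤ fS n d k S z ↔ r ≤ d * 2 ^ n ∧ ∀ j ∈ S, ∀ w ∈ cube n d k j, r ≤ gdist z w := by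
  unfold fS
  split_ifs with h
  · simp only [le_min_iff, le_inf'_iff, mem_biUnion]
    grind
  · simp only [Finset.Nonempty, mem_biUnion] at h
    grind

lemma fS_nonneg (S : Finset (CubeIdx d k)) (z : GridPt n d) : 0 ≤ fS n d k S z :=
  le_fS_iff.2 ⟨by positivity, fun _ _ _ _ ↦ gdist_nonneg _ _⟩

lemma fS_eq_zero_of_mem_cube {S : Finset (CubeIdx d k)} {z : GridPt n d}
    {j : CubeIdx d k} (hj : j ∈ S) (hz : z ∈ cube n d k j) : fS n d k S z = 0 :=
  le_antisymm ((le_fS_iff.1 le_rfl).2 j hj z hz |>.trans_eq (gdist_self z)) (fS_nonneg S z)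

lemma le_fS_of_mem_cube {S : Finset (CubeIdx d k)} {z : GridPt n d}
    {i : CubeIdx d k} (hz : z ∈ cube n d k i) (hS : ∀ j ∈ S, 2 * d ≤ gdist i j) :
    d * 2 ^ (n - k) ≤ fS n d k S z := by
  refine le_fS_iff.2 ⟨?_, fun j hj w hw ↦ ?_⟩
  · gcongr
    · norm_num
    · exact Nat.sub_le n k
  · have hfar : (2 : ℝ) ^ (n - k) * (2 * d) ≤ 2 ^ (n - k) * gdist i j := by
      gcongr
      exact hS j hj
    linarith [mul_gdist_le_of_mem_cube hz hw]

/-- The index of the unique cube of `D_k` containing `x`. The hypothesis `k ≤ n` is what keeps the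
quotients `x i / 2^(n-k)` below `2^k`. -/
def cubeIndex (hkn : k ≤ n) (x : GridPt n d) : CubeIdx d k := fun i ↦
  ⟨x i / 2 ^ (n - k), by
    rw [Nat.div_lt_iff_lt_mul (by positivity), ← pow_add, Nat.add_sub_cancel' hkn]
    exact (x i).isLt⟩

lemma mem_cube_iff (hkn : k ≤ n) {x : GridPt n d} {j : CubeIdx d k} :
    x ∈ cube n d k j ↔ cubeIndex hkn x = j := by
  simp [cube, cubeIndex, funext_iff, Fin.ext_iff]

lemma muMeas_singleton (hkn : k ≤ n) (x : GridPt n d) (ω : CubeIdx d k → ℝ) :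
    muMeas n d k {x} ω = (pp d)⁻¹ * 2 ^ k * ω (cubeIndex hkn x) / 2 ^ (n * d) := by
  have hVol (j : CubeIdx d k) : Vol n d ({x} ∩ cube n d k j) =
      if cubeIndex hkn x = j then 1 / 2 ^ (n * d) else 0 := by
    by_cases h : cubeIndex hkn x = j <;> simp [Vol, mem_cube_iff hkn, h]
  simp [muMeas, hVol, div_eq_mul_inv]

lemma intMu_eq_mul_intVol (hkn : k ≤ n) (f : GridPt n d → ℝ) (ω : CubeIdx d k → ℝ) :
    intMu n d k f ω =
      (pp d)⁻¹ * 2 ^ k * intVol n d (fun x ↦ f x * ω (cubeIndex hkn x)) := by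
  simp only [intMu, intVol, muMeas_singleton hkn, sum_div, mul_sum]
  exact sum_congr rfl fun x _ ↦ by ring

lemma intVol_mono {f g : GridPt n d → ℝ} (h : ∀ x, f x ≤ g x) :
    intVol n d f ≤ intVol n d g :=
  div_le_div_of_nonneg_right (sum_le_sum fun x _ ↦ h x) (by positivity)

lemma intVol_const (n d : ℕ) (c : ℝ) : intVol n d (fun _ ↦ c) = c := by
  simp [intVol, pow_mul]

lemma integral_intVol {Ω : Type*} [MeasurableSpace Ω] {P : Measure Ω}
    {f : Ω → GridPt n d → ℝ} (hf : ∀ x, Integrable (f · x) P) :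
    ∫ ω, intVol n d (f ω) ∂P = intVol n d (fun x ↦ ∫ ω, f ω x ∂P) := by
  simp only [intVol, integral_div]
  rw [integral_finsetSum _ fun x _ ↦ hf x]

lemma pp_pos (d : ℕ) : 0 < pp d := by
  unfold pp
  positivity

lemma pp_le_one (d : ℕ) : pp d ≤ 1 :=
  inv_le_one_of_one_le₀ (one_le_pow₀ (by norm_num))

lemma pow_mul_pp_le_one (d : ℕ) : 12 ^ d * pp d ≤ 1 := by
  rw [pp, mul_inv_le_iff₀ (by positivity), one_mul, pow_mul]
  gcongr
  norm_num

instance (d : ℕ) : IsProbabilityMeasure (stepMeasure d) where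
  measure_univ := by
    have hp := pp_pos d
    have hp1 := pp_le_one d
    simp only [stepMeasure, Measure.add_apply, Measure.smul_apply, measure_univ,
      ENNReal.smul_def, smul_eq_mul, mul_one]
    norm_cast
    rw [← Real.toNNReal_add (by positivity) (by positivity),
      ← Real.toNNReal_add (by positivity) (by linarith), add_halves, add_sub_cancel,
      Real.toNNReal_one]

instance (d k : ℕ) : IsProbabilityMeasure (prodMeasure d k) := by
  unfold prodMeasure
  infer_instance

lemma stepMeasure_real_one (d : ℕ) : (stepMeasure d).real {1} = pp d / 2 := by
  have hne : (-1 : ℝ) ≠ 1 := by norm_num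
  simpa [stepMeasure, measureReal_def, hne] using (half_pos (pp_pos d)).le

lemma stepMeasure_real_neg_one (d : ℕ) : (stepMeasure d).real {-1} = pp d / 2 := by
  have hne : (1 : ℝ) ≠ -1 := by norm_num
  simpa [stepMeasure, measureReal_def, hne] using (half_pos (pp_pos d)).le

lemma ae_mem_stepMeasure (d : ℕ) : ∀ᵐ t ∂stepMeasure d, t ∈ ({1, -1, 0} : Finset ℝ) := by
  unfold stepMeasure
  simp only [ae_add_measure_iff]
  refine ⟨⟨?_, ?_⟩, ?_⟩ <;> exact Measure.ae_smul_measure (by simp [ae_dirac_eq]) _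

lemma ae_mem_prodMeasure (d k : ℕ) :
    ∀ᵐ ω ∂prodMeasure d k, ω ∈ Fintype.piFinset fun _ ↦ ({1, -1, 0} : Finset ℝ) := by
  simp only [Fintype.mem_piFinset]
  exact ae_all_iff.2 fun j ↦ (Measure.quasiMeasurePreserving_eval _ j).ae (ae_mem_stepMeasure d)

lemma integrable_prodMeasure (f : (CubeIdx d k → ℝ) → ℝ) :
    Integrable f (prodMeasure d k) := by
  rw [← Measure.restrict_eq_self_of_ae_mem (ae_mem_prodMeasure d k)]
  exact IntegrableOn.finset

lemma pi_real_setOf_eval_mem_and_forall {ι α : Type*} [Fintype ι] [MeasurableSpace α]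
    (P : Measure α) [IsProbabilityMeasure P] (A B : Set α) {i : ι} {N : Finset ι} (hi : i ∉ N) :
    (Measure.pi fun _ : ι ↦ P).real {ω | ω i ∈ A ∧ ∀ j ∈ N, ω j ∈ B} =
      P.real A * P.real B ^ #N := by
  classical
  have hne {j : ι} (hj : j ∈ N) : j ≠ i := fun h ↦ hi (h ▸ hj)
  have hset : {ω : ι → α | ω i ∈ A ∧ ∀ j ∈ N, ω j ∈ B} =
      Set.pi (insert i N : Finset ι) (fun j ↦ if j = i then A else B) := by
    ext ω
    simp +contextual [Set.mem_pi, hne]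
  rw [hset, measureReal_def, Measure.pi_pi_finset, prod_insert hi,
    prod_congr rfl fun j hj ↦ by rw [if_neg (hne hj)]]
  simp [measureReal_def]

/-- The indices of the cubes near a given cube: the punctured `ℓ1`-ball of radius `2d` around its
index. The cube indices form the grid `[2^k]^d`, so their distance is measured by `gdist`. -/
def neighbors (i : CubeIdx d k) : Finset (CubeIdx d k) :=
  {j | j ≠ i ∧ gdist i j ≤ 2 * d}

lemma card_neighbors_le (i : CubeIdx d k) : (#(neighbors i) : ℝ) ≤ 12 ^ d := by
  calc (#(neighbors i) : ℝ) ≤ #{j | gdist i j ≤ (2 * d : ℕ)} := by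
        rw [Nat.cast_le]
        refine card_le_card fun j hj ↦ mem_filter.2 ⟨mem_univ j, ?_⟩
        exact_mod_cast (mem_filter.1 hj).2.2
    _ ≤ 2 ^ (2 * d) * 3 ^ d := card_gdist_le i (2 * d)
    _ = 12 ^ d := by
        rw [pow_mul, ← mul_pow]
        norm_num

/-- The event that the cube `Q` of index `i` has `X_Q = 1` and `X_{Q'} ≠ -1` for every neighbor
`Q'`. -/
def isolatedPositive (i : CubeIdx d k) : Set (CubeIdx d k → ℝ) :=
  {ω | ω i = 1 ∧ ∀ j ∈ neighbors i, ω j ≠ -1}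

lemma prodMeasure_real_isolatedPositive (i : CubeIdx d k) :
    (prodMeasure d k).real (isolatedPositive i) =
      pp d / 2 * (1 - pp d / 2) ^ #(neighbors i) := by
  have hi : i ∉ neighbors i := by simp [neighbors]
  have hcompl : (stepMeasure d).real {-1}ᶜ = 1 - pp d / 2 := by
    rw [probReal_compl_eq_one_sub (measurableSet_singleton _), stepMeasure_real_neg_one]
  rw [← hcompl, ← stepMeasure_real_one]
  exact pi_real_setOf_eval_mem_and_forall (stepMeasure d) {1} {-1}ᶜ hi

lemma pp_div_four_le_real_isolatedPositive (i : CubeIdx d k) :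
    pp d / 4 ≤ (prodMeasure d k).real (isolatedPositive i) := by
  have hp := pp_pos d
  have bernoulli : 1 - #(neighbors i) * (pp d / 2) ≤ (1 - pp d / 2) ^ #(neighbors i) := by
    simpa [sub_eq_add_neg] using
      one_add_mul_le_pow (a := -(pp d / 2)) (by linarith [pp_le_one d]) #(neighbors i)
  have hcard : #(neighbors i) * pp d ≤ 1 :=
    (mul_le_mul_of_nonneg_right (card_neighbors_le i) hp.le).trans (pow_mul_pp_le_one d)
  rw [prodMeasure_real_isolatedPositive]
  calc pp d / 4 = pp d / 2 * (1 / 2) := by ring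
    _ ≤ pp d / 2 * (1 - pp d / 2) ^ #(neighbors i) := by
        gcongr
        linarith

lemma mem_Sminus {ω : CubeIdx d k → ℝ} {j : CubeIdx d k} :
    j ∈ Sminus d k ω ↔ ω j = -1 := by
  simp [Sminus]

lemma fS_Sminus_mul_nonneg {x : GridPt n d} {i : CubeIdx d k} (hx : x ∈ cube n d k i)
    {ω : CubeIdx d k → ℝ} (hω : ω i ∈ ({1, -1, 0} : Finset ℝ)) :
    0 ≤ fS n d k (Sminus d k ω) x * ω i := by
  simp only [mem_insert, mem_singleton] at hω
  rcases hω with h | h | h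
  · simpa [h] using fS_nonneg (Sminus d k ω) x
  · simp [fS_eq_zero_of_mem_cube (mem_Sminus.2 h) hx]
  · simp [h]

lemma le_fS_Sminus_mul_of_mem_isolatedPositive {x : GridPt n d} {i : CubeIdx d k}
    (hx : x ∈ cube n d k i) {ω : CubeIdx d k → ℝ} (hω : ω ∈ isolatedPositive i) :
    d * 2 ^ (n - k) ≤ fS n d k (Sminus d k ω) x * ω i := by
  obtain ⟨hi, hneighbors⟩ := hω
  rw [hi, mul_one]
  refine le_fS_of_mem_cube hx fun j hj ↦ ?_
  by_contra! hnear
  have hj := mem_Sminus.1 hj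
  have hji : j ≠ i := by
    rintro rfl
    norm_num [hi] at hj
  exact hneighbors j (by simp [neighbors, hji, hnear.le]) hj

lemma le_integral_fS_Sminus_mul {x : GridPt n d} {i : CubeIdx d k}
    (hx : x ∈ cube n d k i) :
    d * 2 ^ (n - k) * (pp d / 4) ≤ ∫ ω, fS n d k (Sminus d k ω) x * ω i ∂prodMeasure d k := by
  calc d * 2 ^ (n - k) * (pp d / 4)
      ≤ d * 2 ^ (n - k) * (prodMeasure d k).real (isolatedPositive i) := by
        gcongr
        exact pp_div_four_le_real_isolatedPositive i
    _ ≤ d * 2 ^ (n - k) * (prodMeasure d k).real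
          {ω | d * 2 ^ (n - k) ≤ fS n d k (Sminus d k ω) x * ω i} := by
        refine mul_le_mul_of_nonneg_left (measureReal_mono fun ω ↦ ?_) (by positivity)
        exact le_fS_Sminus_mul_of_mem_isolatedPositive hx
    _ ≤ ∫ ω, fS n d k (Sminus d k ω) x * ω i ∂prodMeasure d k := by
        refine mul_meas_ge_le_integral_of_nonneg ?_ (integrable_prodMeasure _) _
        filter_upwards [ae_mem_prodMeasure d k] with ω hω
        exact fS_Sminus_mul_nonneg hx (Fintype.mem_piFinset.1 hω i)

end

theorem expected_intMu_ge_general (n d k : ℕ) (hkn : k ≤ n) :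
    ∫ ω, intMu n d k (fS n d k (Sminus d k ω)) ω ∂(prodMeasure d k)
      ≥ (1 / 4) * (d : ℝ) * 2 ^ n := by
  have hp := pp_pos d
  have hpow : (2 : ℝ) ^ n = 2 ^ k * 2 ^ (n - k) := by rw [← pow_add, Nat.add_sub_cancel' hkn]
  calc ∫ ω, intMu n d k (fS n d k (Sminus d k ω)) ω ∂(prodMeasure d k)
      = (pp d)⁻¹ * 2 ^ k * intVol n d (fun x ↦
          ∫ ω, fS n d k (Sminus d k ω) x * ω (cubeIndex hkn x) ∂prodMeasure d k) := by
        simp_rw [intMu_eq_mul_intVol hkn, integral_const_mul]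
        rw [integral_intVol fun x ↦ integrable_prodMeasure _]
    _ ≥ (pp d)⁻¹ * 2 ^ k * intVol n d (fun _ ↦ d * 2 ^ (n - k) * (pp d / 4)) := by
        gcongr
        exact intVol_mono fun x ↦ le_integral_fS_Sminus_mul ((mem_cube_iff hkn).2 rfl)
    _ = 1 / 4 * d * 2 ^ n := by
        rw [intVol_const, hpow]
        field_simp

/-- `E[∫ f_{S₋(X)} dμ_k] ≥ (1/6)·d·2^n`. -/
theorem expected_intMu_ge (n d k : ℕ) (hd : 3 ≤ d) (hk : 1 ≤ k) (hkn : k ≤ n) :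
    ∫ ω, intMu n d k (fS n d k (Sminus d k ω)) ω ∂(prodMeasure d k)
      ≥ (1/6) * (d:ℝ) * 2^n := by
  refine le_trans ?_ (expected_intMu_ge_general n d k hkn)
  gcongr
  norm_num
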